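/- Let V be a finite set, let k ≤ |V|, let (Ω_v)_{v ∈ V} be finite nonempty types, and let P be a probability mass function on Π_{v ∈ V} Ω_v that factorizes according to a junction tree on V all of whose clusters have at most k elements (a k-width junction tree). Then there exists a k-order cherry tree on V according to which P factorizes. -/

import Mathlib

/-- A junction tree on a vertex set `V`: a finite tree `G` with nodes labeled by
clusters (finite subsets of `V`), such that no cluster is contained in the cluster
of another node and the running intersection property holds.  (The covering
condition "the clusters cover `V`" is stated separately as `JTree.CoversAll`,
so that junction trees on subsets of `V`, such as the tree formed by the
separators, can be treated uniformly.) -/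
structure JTree (V : Type) [DecidableEq V] where
  ι : Type
  [fin : Fintype ι]
  [deq : DecidableEq ι]
  G : SimpleGraph ι
  isTree : G.IsTree
  C : ι → Finset V
  noSub : ∀ i j : ι, i ≠ j → ¬ C i ⊆ C j
  rip : ∀ (i j : ι) (p : G.Walk i j), p.IsPath → ∀ x ∈ p.support, C i ∩ C j ⊆ C x

attribute [instance] JTree.fin JTree.deq

namespace JTree

variable {V : Type} [DecidableEq V]

/-- The clusters cover all of `V`: the junction tree is a junction tree "on `V`". -/
def CoversAll (T : JTree V) : Prop := ∀ v : V, ∃ i, v ∈ T.C i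

/-- `T` is a `k`-order cherry tree: every cluster has exactly `k` elements and
every edge-separator has exactly `k - 1` elements. -/
def IsCherry (T : JTree V) (k : ℕ) : Prop :=
  (∀ i, (T.C i).card = k) ∧ ∀ i j, T.G.Adj i j → (T.C i ∩ T.C j).card = k - 1

/-- The set of (distinct) separators of `T`. -/
def separators (T : JTree V) : Set (Finset V) :=
  { s | ∃ i j, T.G.Adj i j ∧ s = T.C i ∩ T.C j }

/-- The separators of `T` form a `(k-1)`-order cherry tree: there is a junction
tree whose set of clusters is exactly the set of distinct separators of `T`, in
which every cluster has `k - 1` elements and every edge-separator has `k - 2`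
elements. -/
def SeparatorsFormCherry (T : JTree V) (k : ℕ) : Prop :=
  ∃ T' : JTree V, T'.IsCherry (k - 1) ∧ Set.range T'.C = T.separators

/-- Every cluster of `T'` is the union of two clusters that are adjacent in `T`. -/
def Succ (T T' : JTree V) : Prop :=
  ∀ i' : T'.ι, ∃ i j : T.ι, T.G.Adj i j ∧ T'.C i' = T.C i ∪ T.C j

/-- `T` is a truncated R-vine at level `k`: there exists a cherry-vine sequence
`T₂, …, T_k` on `V` (with `T_m` an `m`-order cherry tree on `V` and each cluster of
`T_{m+1}` the union of two adjacent clusters of `T_m`) whose top tree `T_k` is `T`. -/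
def IsTruncatedRVine (T : JTree V) (k : ℕ) : Prop :=
  ∃ Ts : ℕ → JTree V,
    (∀ m, 2 ≤ m → m ≤ k → (Ts m).CoversAll ∧ (Ts m).IsCherry m) ∧
    (∀ m, 2 ≤ m → m < k → Succ (Ts m) (Ts (m + 1))) ∧
    Ts k = T

/-- The separator attached to an edge of the tree, as a function on `Sym2`. -/
noncomputable def sep (T : JTree V) : Sym2 T.ι → Finset V :=
  Sym2.lift ⟨fun i j => T.C i ∩ T.C j, fun _ _ => Finset.inter_comm _ _⟩

/-- The (finite) set of edges of the tree underlying `T`. -/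
noncomputable def edgeFinset (T : JTree V) : Finset (Sym2 T.ι) :=
  Set.Finite.toFinset (Set.toFinite T.G.edgeSet)

end JTree

open scoped BigOperators

/- The marginal of a probability mass function `P` on `Π v, Ω v` with respect to
a set `A` of coordinates: `P_A(x) = P { y | y v = x v for all v ∈ A }`. -/
open Classical in
noncomputable def marg {V : Type} [Fintype V] {Ω : V → Type} [∀ v, Fintype (Ω v)]
    (P : (∀ v, Ω v) → ℝ) (A : Finset V) (x : ∀ v, Ω v) : ℝ :=
  ∑ y : ∀ v, Ω v, if ∀ v ∈ A, y v = x v then P y else 0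

/-- `P` factorizes according to the junction tree `T`:
`P(x) ⬝ ∏_{edges {i,j}} P_{C i ∩ C j}(x) = ∏_{nodes i} P_{C i}(x)` for every `x`. -/
noncomputable def Factorizes {V : Type} [Fintype V] [DecidableEq V]
    {Ω : V → Type} [∀ v, Fintype (Ω v)]
    (T : JTree V) (P : (∀ v, Ω v) → ℝ) : Prop :=
  ∀ x : ∀ v, Ω v,
    P x * ∏ e ∈ T.edgeFinset, marg P (T.sep e) x = ∏ i : T.ι, marg P (T.C i) x

/-!
Let `T` arise from `T₀` by attaching a leaf with cluster `B`. Summing the factorization of `P` over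
the vertices which occur only in `B` shows that the marginal of `P` on the vertices of `T₀`
factorizes according to `T₀`; dividing the two factorizations, the coordinates in `B` are
independent of those in `T₀`, given their intersection, which lies in a single cluster of `T₀`.

A `k`-order cherry tree for `T` is grown from one for `T₀`, or from a single cluster of `k` vertices
if `T₀` has fewer than `k`, by adding the missing vertices of `B` one at a time. If `N` is the set
of vertices of `B` already present, then `N` has fewer than `k` elements and lies in some cluster,
hence in a `(k - 1)`-element subset `S` of that cluster. By decomposition and weak union, the next
vertex `v` of `B` is independent of the vertices already present, given `S`, so that a leaf with
cluster `S ∪ {v}` can be attached; this cluster contains `N ∪ {v}`, and the step can be repeated.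
-/

section Marginal

variable {V : Type} [Fintype V] {Ω : V → Type} [∀ v, Fintype (Ω v)] {P : (∀ v, Ω v) → ℝ}
  {A B C : Finset V}

theorem dependsOn_marg (P : (∀ v, Ω v) → ℝ) (A : Finset V) : DependsOn (marg P A) A := by
  classical
  intro x y hxy
  unfold marg
  refine Finset.sum_congr rfl fun z _ => if_congr (forall₂_congr fun v hv => ?_) rfl rfl
  rw [hxy v hv]

theorem marg_nonneg (hP : ∀ y, 0 ≤ P y) (A : Finset V) (x : ∀ v, Ω v) : 0 ≤ marg P A x :=
  Finset.sum_nonneg fun y _ => by split_ifs <;> simp [hP]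

theorem marg_anti (hP : ∀ y, 0 ≤ P y) (hAB : A ⊆ B) (x : ∀ v, Ω v) :
    marg P B x ≤ marg P A x := by
  refine Finset.sum_le_sum fun y _ => ?_
  by_cases hB : ∀ v ∈ B, y v = x v
  · rw [if_pos hB, if_pos fun v hv => hB v (hAB hv)]
  · rw [if_neg hB]
    split_ifs <;> simp [hP]

theorem marg_eq_zero_of_subset (hP : ∀ y, 0 ≤ P y) (hAB : A ⊆ B) {x : ∀ v, Ω v}
    (hA : marg P A x = 0) : marg P B x = 0 :=
  le_antisymm (hA ▸ marg_anti hP hAB x) (marg_nonneg hP B x)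

@[simp]
theorem marg_univ (P : (∀ v, Ω v) → ℝ) : marg P Finset.univ = P := by
  classical
  ext x
  simp [marg, ← funext_iff]

theorem marg_mul_of_dependsOn {f : (∀ v, Ω v) → ℝ} (hf : DependsOn f A) (x : ∀ v, Ω v) :
    marg (fun y => P y * f y) A x = marg P A x * f x := by
  unfold marg
  rw [Finset.sum_mul]
  refine Finset.sum_congr rfl fun y _ => ?_
  split_ifs with h
  · exact congrArg (P y * ·) (hf h)
  · rw [zero_mul]

variable [DecidableEq V]

-- Since `A ∪ B = univ`, only one point agrees with `y` on `A` and with `x` on `B`; otherwise the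
-- right-hand side would acquire a multiplicity.
theorem marg_marg (h : A ∪ B = Finset.univ) (P : (∀ v, Ω v) → ℝ) :
    marg (marg P A) B = marg P (A ∩ B) := by
  -- The instance `Fintype (∀ v, Ω v)` in the definition of `marg` is the classical one.
  obtain rfl : ‹DecidableEq V› = fun v w => Classical.propDecidable (v = w) :=
    Subsingleton.elim _ _
  classical
  ext x
  have interpolate (y z : ∀ v, Ω v) : (∀ v ∈ B, z v = x v) ∧ (∀ v ∈ A, y v = z v) ↔
      z = B.piecewise x y ∧ ∀ v ∈ A ∩ B, y v = x v := by
    simp only [funext_iff, ← forall_and, Finset.piecewise]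
    refine forall_congr' fun v => ?_
    have hv : v ∈ A ∪ B := h ▸ Finset.mem_univ v
    grind
  calc marg (marg P A) B x
      = ∑ y : ∀ v, Ω v, ∑ z : ∀ v, Ω v,
          if (∀ v ∈ B, z v = x v) ∧ (∀ v ∈ A, y v = z v) then P y else 0 := by
        rw [Finset.sum_comm]
        simp only [ite_and, Finset.sum_ite_irrel, Finset.sum_const_zero]
        rfl
    _ = marg P (A ∩ B) x := by
        refine Finset.sum_congr rfl fun y _ => ?_
        simp only [interpolate, ite_and, Finset.sum_ite_eq', Finset.mem_univ, if_true]

-- Sum out the coordinates in `B \ C`, on which `f` and `g` do not depend.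
theorem marg_union_mul_eq {f g : (∀ v, Ω v) → ℝ} (hf : DependsOn f A) (hg : DependsOn g A)
    (h : ∀ x, marg P (A ∪ B) x * f x = marg P B x * g x) (hC : A ∩ B ⊆ C) (hCB : C ⊆ B)
    (x : ∀ v, Ω v) : marg P (A ∪ C) x * f x = marg P C x * g x := by
  let D := (B \ C)ᶜ
  have hAD : A ⊆ D := by grind [Finset.mem_compl]
  have hABD : (A ∪ B) ∩ D = A ∪ C := by grind [Finset.mem_compl]
  have hBD : B ∩ D = C := by grind [Finset.mem_compl]
  have hBD' : B ∪ D = Finset.univ := by grind [Finset.mem_compl]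
  calc marg P (A ∪ C) x * f x
      = marg (fun y => marg P (A ∪ B) y * f y) D x := by
        rw [marg_mul_of_dependsOn (hf.mono (mod_cast hAD)), marg_marg (by grind), hABD]
    _ = marg (fun y => marg P B y * g y) D x := by rw [funext h]
    _ = marg P C x * g x := by
        rw [marg_mul_of_dependsOn (hg.mono (mod_cast hAD)), marg_marg hBD', hBD]

/-- The coordinates in `A` and those in `B` are conditionally independent under `P`, given the
coordinates in `A ∩ B`; the product form makes sense where the marginal on `A ∩ B` vanishes. -/
def CondIndepMarg (P : (∀ v, Ω v) → ℝ) (A B : Finset V) : Prop :=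
  ∀ x, marg P (A ∪ B) x * marg P (A ∩ B) x = marg P A x * marg P B x

namespace CondIndepMarg

theorem symm (h : CondIndepMarg P A B) : CondIndepMarg P B A := fun x => by
  rw [Finset.union_comm, Finset.inter_comm, h x, mul_comm]

theorem decomposition (h : CondIndepMarg P A B) (hC : A ∩ B ⊆ C) (hCB : C ⊆ B) :
    CondIndepMarg P A C := by
  intro x
  have hAC : A ∩ C = A ∩ B := by grind
  rw [hAC, mul_comm (marg P A x)]
  exact marg_union_mul_eq ((dependsOn_marg P _).mono (by grind)) (dependsOn_marg P A)
    (fun y => (h y).trans (mul_comm _ _)) hC hCB x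

theorem weak_union (hP : ∀ y, 0 ≤ P y) (h : CondIndepMarg P A B) (hAC : A ⊆ C)
    (hC : C ⊆ A ∪ B) : CondIndepMarg P C B := by
  intro x
  have hAB := h x
  have hACB := h.decomposition (C := C ∩ B) (by grind) (by grind) x
  rw [show A ∪ C ∩ B = C by grind, show A ∩ (C ∩ B) = A ∩ B by grind] at hACB
  rw [show C ∪ B = A ∪ B by grind]
  by_cases h0 : marg P (A ∩ B) x = 0
  · rw [marg_eq_zero_of_subset hP (by grind : A ∩ B ⊆ C ∩ B) h0,
      marg_eq_zero_of_subset hP (by grind : A ∩ B ⊆ C) h0, mul_zero, zero_mul]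
  · apply mul_right_cancel₀ h0
    linear_combination marg P (C ∩ B) x * hAB - marg P B x * hACB

end CondIndepMarg

end Marginal

section Graph

variable {ι : Type*} {G : SimpleGraph ι} {i j : ι}

theorem support_subset_support_of_isPath (hG : G.IsAcyclic) {p : G.Walk i j} (hp : p.IsPath)
    (w : G.Walk i j) : p.support ⊆ w.support := by
  classical
  have hpw : p = w.toPath :=
    congrArg Subtype.val ((hG.subsingleton_path i j).elim ⟨p, hp⟩ w.toPath)
  exact hpw ▸ w.support_toPath_subset_support

theorem edgeSet_eq_insert_of_forall_adj_eq {l p : ι} (hlp : G.Adj l p)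
    (hp : ∀ j, G.Adj l j → j = p) :
    G.edgeSet = insert s(l, p) (Sym2.map Subtype.val '' (G.induce {l}ᶜ).edgeSet) := by
  ext e
  induction e with | _ i j =>
  rw [Set.mem_insert_iff, SimpleGraph.mem_edgeSet]
  constructor
  · intro hij
    by_cases hi : i = l
    · subst hi
      exact Or.inl (by rw [hp j hij])
    by_cases hj : j = l
    · subst hj
      exact Or.inl (by rw [hp i hij.symm, Sym2.eq_swap])
    exact Or.inr ⟨s(⟨i, hi⟩, ⟨j, hj⟩), hij, rfl⟩
  · rintro (he | ⟨e, he, hij⟩)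
    · rwa [← SimpleGraph.mem_edgeSet, he]
    · rw [← SimpleGraph.mem_edgeSet, ← hij]
      induction e with | _ a b => exact he

/-- The graph obtained from `G` by attaching a new leaf `none` to the node `p`. -/
def leafGraph (G : SimpleGraph ι) (p : ι) : SimpleGraph (Option ι) :=
  G.map Function.Embedding.some ⊔ SimpleGraph.edge none (some p)

theorem leafGraph_adj_none_some (G : SimpleGraph ι) (p : ι) :
    (leafGraph G p).Adj none (some p) := by
  simp [leafGraph, SimpleGraph.edge_adj]

/-- The inclusion of `G` into the graph with an additional leaf, as a graph homomorphism. -/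
def leafGraphHom (G : SimpleGraph ι) (p : ι) : G →g leafGraph G p where
  toFun := some
  map_rel' h := Or.inl ((SimpleGraph.map_adj _ _ _ _).2 ⟨_, _, h, rfl, rfl⟩)

theorem edgeSet_leafGraph (G : SimpleGraph ι) (p : ι) :
    (leafGraph G p).edgeSet = insert s(none, some p) (Sym2.map some '' G.edgeSet) := by
  rw [leafGraph, SimpleGraph.edgeSet_sup, SimpleGraph.edgeSet_map,
    SimpleGraph.edgeSet_edge_of_ne (by simp), Set.union_comm, Set.insert_eq]
  rfl

theorem isTree_leafGraph [Finite ι] (hG : G.IsTree) (p : ι) : (leafGraph G p).IsTree := by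
  obtain ⟨hconn, hcard⟩ := SimpleGraph.isTree_iff_connected_and_card.1 hG
  refine SimpleGraph.isTree_iff_connected_and_card.2 ⟨?_, ?_⟩
  · refine (SimpleGraph.connected_iff_exists_forall_reachable _).2 ⟨some p, ?_⟩
    rintro (_ | j)
    · exact (leafGraph_adj_none_some G p).symm.reachable
    · exact (hconn.preconnected p j).map (leafGraphHom G p)
  · have hnew : s(none, some p) ∉ Sym2.map some '' G.edgeSet := by
      rintro ⟨e, -, he⟩
      have hmem : none ∈ Sym2.map some e := he ▸ Sym2.mem_mk_left _ _
      simp at hmem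
    rw [edgeSet_leafGraph, Nat.card_coe_set_eq,
      Set.ncard_insert_of_notMem hnew (Set.toFinite _),
      Set.ncard_image_of_injective _ (Sym2.map.injective (Option.some_injective ι)),
      ← Nat.card_coe_set_eq, hcard, Finite.card_option]

end Graph

namespace JTree

variable {V : Type} [DecidableEq V]

section Vertices

variable {T T' T'' : JTree V} {v : V}

/-- The union of the clusters of `T`, that is, the vertex set on which `T` is a junction tree. -/
def vertices (T : JTree V) : Finset V := Finset.univ.biUnion T.C

@[simp]
theorem mem_vertices : v ∈ T.vertices ↔ ∃ i, v ∈ T.C i := by simp [vertices]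

theorem cluster_subset_vertices (T : JTree V) (i : T.ι) : T.C i ⊆ T.vertices :=
  Finset.subset_biUnion_of_mem T.C (Finset.mem_univ i)

theorem nontrivial_of_width_lt_card_vertices (T : JTree V) {k : ℕ}
    (hwidth : ∀ i, (T.C i).card ≤ k) (hk : k < T.vertices.card) : Nontrivial T.ι := by
  by_contra hT
  have : Subsingleton T.ι := not_nontrivial_iff_subsingleton.1 hT
  obtain ⟨i⟩ := T.isTree.connected.nonempty
  have hsub : T.vertices ⊆ T.C i :=
    Finset.biUnion_subset.2 fun j _ => (congrArg T.C (Subsingleton.elim j i)).subset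
  exact hk.not_ge ((Finset.card_le_card hsub).trans (hwidth i))

theorem exists_walk_mem (T : JTree V) {i j : T.ι} (hi : v ∈ T.C i) (hj : v ∈ T.C j) :
    ∃ w : T.G.Walk i j, ∀ l ∈ w.support, v ∈ T.C l := by
  obtain ⟨w, hw, -⟩ := T.isTree.existsUnique_path i j
  exact ⟨w, fun l hl => T.rip i j w hw l hl (Finset.mem_inter.2 ⟨hi, hj⟩)⟩

theorem coversAll_iff_vertices_eq_univ [Fintype V] : T.CoversAll ↔ T.vertices = Finset.univ := by
  simp [CoversAll, Finset.eq_univ_iff_forall]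

@[simp]
theorem mem_edgeFinset {e : Sym2 T.ι} : e ∈ T.edgeFinset ↔ e ∈ T.G.edgeSet := by
  simp [edgeFinset]

@[simp]
theorem sep_mk (T : JTree V) (i j : T.ι) : T.sep s(i, j) = T.C i ∩ T.C j := rfl

theorem sep_subset_vertices (T : JTree V) (e : Sym2 T.ι) : T.sep e ⊆ T.vertices := by
  induction e with | _ i j =>
  exact Finset.inter_subset_left.trans (T.cluster_subset_vertices i)

theorem isCherry_iff {k : ℕ} : T.IsCherry k ↔
    (∀ i, (T.C i).card = k) ∧ ∀ e ∈ T.edgeFinset, (T.sep e).card = k - 1 := by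
  simp [IsCherry, Sym2.forall]

/-- Every cluster of `T` is contained in a cluster of `T'`. -/
def Refines (T T' : JTree V) : Prop := ∀ i, ∃ j, T.C i ⊆ T'.C j

theorem Refines.refl (T : JTree V) : T.Refines T := fun i => ⟨i, subset_rfl⟩

theorem Refines.trans (h : T.Refines T') (h' : T'.Refines T'') : T.Refines T'' := fun i =>
  let ⟨j, hij⟩ := h i
  let ⟨l, hjl⟩ := h' j
  ⟨l, hij.trans hjl⟩

theorem Refines.vertices_subset (h : T.Refines T') : T.vertices ⊆ T'.vertices :=
  Finset.biUnion_subset.2 fun i _ =>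
    let ⟨j, hij⟩ := h i
    hij.trans (T'.cluster_subset_vertices j)

end Vertices

section MargFactorizes

variable [Fintype V] {Ω : V → Type} [∀ v, Fintype (Ω v)]

/-- The marginal of `P` on the vertices of `T` factorizes according to `T`. This extends
`Factorizes` to junction trees which do not cover all of `V`. -/
def MargFactorizes (T : JTree V) (P : (∀ v, Ω v) → ℝ) : Prop :=
  ∀ x, marg P T.vertices x * ∏ e ∈ T.edgeFinset, marg P (T.sep e) x = ∏ i, marg P (T.C i) x

theorem margFactorizes_iff_factorizes {T : JTree V} (hT : T.CoversAll) (P : (∀ v, Ω v) → ℝ) :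
    T.MargFactorizes P ↔ Factorizes T P := by
  simp only [MargFactorizes, Factorizes, coversAll_iff_vertices_eq_univ.1 hT, marg_univ]

end MargFactorizes

section Single

/-- The junction tree with the single cluster `A`. -/
def single (A : Finset V) : JTree V where
  ι := Unit
  G := ⊥
  isTree := .of_subsingleton
  C _ := A
  noSub i j h := (h (Subsingleton.elim i j)).elim
  rip _ _ _ _ _ _ := Finset.inter_subset_left

@[simp]
theorem vertices_single (A : Finset V) : (single A).vertices = A := by
  ext v
  exact mem_vertices.trans ⟨fun ⟨_, h⟩ => h, fun h => ⟨(), h⟩⟩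

theorem isCherry_single (A : Finset V) : (single A).IsCherry A.card :=
  ⟨fun _ => rfl, fun _ _ h => h.elim⟩

theorem refines_single {T : JTree V} {A : Finset V} (h : T.vertices ⊆ A) :
    T.Refines (single A) := fun i => ⟨(), (T.cluster_subset_vertices i).trans h⟩

theorem margFactorizes_single [Fintype V] {Ω : V → Type} [∀ v, Fintype (Ω v)]
    (A : Finset V) (P : (∀ v, Ω v) → ℝ) : (single A).MargFactorizes P := by
  intro x
  have hedge : (single A).edgeFinset = ∅ := by
    refine Finset.eq_empty_of_forall_notMem fun e he => ?_
    induction e with | _ i j =>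
    exact (mem_edgeFinset.1 he : (⊥ : SimpleGraph Unit).Adj i j)
  have hnode : ∏ i, marg P ((single A).C i) x = marg P A x := Fintype.prod_unique (ι := Unit) _
  rw [hedge, hnode, vertices_single, Finset.prod_empty, mul_one]

end Single

/-- `T'` arises from `T` by attaching a new leaf to the node `parent`. The nodes of `T'` are
those of `T` and the leaf up to the bijection `nodeEquiv`, so that both the addition and the
removal of a leaf are covered. -/
structure LeafExtension (T T' : JTree V) where
  nodeEquiv : Option T.ι ≃ T'.ι
  parent : T.ι
  cluster_some : ∀ i, T'.C (nodeEquiv (some i)) = T.C i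
  edgeSet_eq : T'.G.edgeSet = insert s(nodeEquiv none, nodeEquiv (some parent))
    (Sym2.map (nodeEquiv ∘ some) '' T.G.edgeSet)

namespace LeafExtension

section Combinatorics

variable {T T' : JTree V} (E : T.LeafExtension T')

/-- The cluster of the leaf of `T'` which is not a node of `T`. -/
def leafCluster : Finset V := T'.C (E.nodeEquiv none)

theorem forall_node_iff {p : Finset V → Prop} :
    (∀ i, p (T'.C i)) ↔ p E.leafCluster ∧ ∀ i, p (T.C i) := by
  simp only [← E.nodeEquiv.forall_congr_right, Option.forall, E.cluster_some, leafCluster]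

theorem prod_cluster {M : Type*} [CommMonoid M] (f : Finset V → M) :
    ∏ i, f (T'.C i) = f E.leafCluster * ∏ i, f (T.C i) := by
  simp only [← E.nodeEquiv.prod_comp, Fintype.prod_option, E.cluster_some, leafCluster]

theorem vertices_eq : T'.vertices = T.vertices ∪ E.leafCluster := by
  ext v
  simp only [mem_vertices, Finset.mem_union, ← E.nodeEquiv.exists_congr_right, Option.exists,
    E.cluster_some, leafCluster, or_comm]

theorem refines (E : T.LeafExtension T') : T.Refines T' := fun i =>
  ⟨E.nodeEquiv (some i), (E.cluster_some i).ge⟩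

theorem card_node (E : T.LeafExtension T') : Fintype.card T'.ι = Fintype.card T.ι + 1 := by
  rw [← Fintype.card_congr E.nodeEquiv, Fintype.card_option]

theorem leaf_notMem_map (e : Sym2 T.ι) :
    E.nodeEquiv none ∉ Sym2.map (E.nodeEquiv ∘ some) e := by
  simp

theorem eq_of_adj_leaf {i : T'.ι} (h : T'.G.Adj (E.nodeEquiv none) i) :
    i = E.nodeEquiv (some E.parent) := by
  rw [← SimpleGraph.mem_edgeSet, E.edgeSet_eq] at h
  rcases h with h | ⟨e, -, he⟩
  · exact Sym2.congr_right.1 h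
  · exact (E.leaf_notMem_map e (he ▸ Sym2.mem_mk_left _ _)).elim

theorem vertices_inter_leafCluster :
    T.vertices ∩ E.leafCluster = E.leafCluster ∩ T.C E.parent := by
  refine subset_antisymm (fun v hv => ?_) (by grind [T.cluster_subset_vertices E.parent])
  obtain ⟨hvT, hvl⟩ := Finset.mem_inter.1 hv
  obtain ⟨j, hj⟩ := mem_vertices.1 hvT
  rw [← E.cluster_some j] at hj
  obtain ⟨w, hw⟩ := T'.exists_walk_mem hvl hj
  have hparent : w.snd = E.nodeEquiv (some E.parent) :=
    E.eq_of_adj_leaf (w.adj_snd (SimpleGraph.Walk.not_nil_of_ne (by simp)))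
  have hvp := hw w.snd (w.getVert_mem_support 1)
  rw [hparent, E.cluster_some] at hvp
  exact Finset.mem_inter.2 ⟨hvl, hvp⟩

theorem sep_leafEdge : T'.sep s(E.nodeEquiv none, E.nodeEquiv (some E.parent)) =
    T.vertices ∩ E.leafCluster := by
  rw [sep_mk, E.cluster_some, E.vertices_inter_leafCluster, leafCluster]

theorem sep_map (e : Sym2 T.ι) : T'.sep (Sym2.map (E.nodeEquiv ∘ some) e) = T.sep e := by
  induction e with | _ i j =>
  simp [E.cluster_some]

theorem edgeFinset_eq [DecidableEq (Sym2 T'.ι)] :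
    T'.edgeFinset = insert s(E.nodeEquiv none, E.nodeEquiv (some E.parent))
      (T.edgeFinset.image (Sym2.map (E.nodeEquiv ∘ some))) := by
  ext e
  simp [E.edgeSet_eq]

theorem prod_sep {M : Type*} [CommMonoid M] (f : Finset V → M) :
    ∏ e ∈ T'.edgeFinset, f (T'.sep e) =
      f (T.vertices ∩ E.leafCluster) * ∏ e ∈ T.edgeFinset, f (T.sep e) := by
  classical
  have hnew : s(E.nodeEquiv none, E.nodeEquiv (some E.parent)) ∉
      T.edgeFinset.image (Sym2.map (E.nodeEquiv ∘ some)) := by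
    intro h
    obtain ⟨e, -, he⟩ := Finset.mem_image.1 h
    exact E.leaf_notMem_map e (he ▸ Sym2.mem_mk_left _ _)
  have hinj : Function.Injective (Sym2.map (E.nodeEquiv ∘ some)) :=
    Sym2.map.injective (E.nodeEquiv.injective.comp (Option.some_injective _))
  rw [E.edgeFinset_eq, Finset.prod_insert hnew, E.sep_leafEdge, Finset.prod_image hinj.injOn]
  simp only [E.sep_map]

theorem isCherry {k : ℕ} (hT : T.IsCherry k) (hcard : E.leafCluster.card = k)
    (hsep : (T.vertices ∩ E.leafCluster).card = k - 1) : T'.IsCherry k := by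
  classical
  rw [isCherry_iff] at hT ⊢
  refine ⟨(E.forall_node_iff (p := fun A => A.card = k)).2 ⟨hcard, hT.1⟩, ?_⟩
  rw [E.edgeFinset_eq, Finset.forall_mem_insert, Finset.forall_mem_image, E.sep_leafEdge]
  simpa only [E.sep_map] using ⟨hsep, hT.2⟩

end Combinatorics

section Factorization

variable [Fintype V] {Ω : V → Type} [∀ v, Fintype (Ω v)] {P : (∀ v, Ω v) → ℝ} {T T' : JTree V}

theorem margFactorizes (E : T.LeafExtension T') (hT : T.MargFactorizes P)
    (hP : CondIndepMarg P T.vertices E.leafCluster) : T'.MargFactorizes P := by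
  intro x
  rw [E.prod_sep (marg P · x), E.prod_cluster (marg P · x), E.vertices_eq, ← mul_assoc, hP x,
    ← hT x]
  ring

theorem margFactorizes_left (E : T.LeafExtension T') (hP : ∀ y, 0 ≤ P y)
    (hT' : T'.MargFactorizes P) : T.MargFactorizes P := by
  intro x
  let S := T.vertices ∩ E.leafCluster
  have hS : S ⊆ T.vertices := Finset.inter_subset_left
  have hdep {A : Finset V} (hA : A ⊆ T.vertices) : DependsOn (marg P A) T.vertices :=
    (dependsOn_marg P A).mono (mod_cast hA)
  have hsep : DependsOn (fun y => marg P S y * ∏ e ∈ T.edgeFinset, marg P (T.sep e) y)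
      T.vertices := fun y z h => congrArg₂ (· * ·) (hdep hS h)
    (Finset.prod_congr rfl fun e _ => hdep (T.sep_subset_vertices e) h)
  have hcluster : DependsOn (fun y => ∏ i, marg P (T.C i) y) T.vertices := fun y z h =>
    Finset.prod_congr rfl fun i _ => hdep (T.cluster_subset_vertices i) h
  have hfac (y : ∀ v, Ω v) :
      marg P (T.vertices ∪ E.leafCluster) y *
        (marg P S y * ∏ e ∈ T.edgeFinset, marg P (T.sep e) y) =
      marg P E.leafCluster y * ∏ i, marg P (T.C i) y := by
    rw [← E.vertices_eq, ← E.prod_sep (marg P · y), hT' y, E.prod_cluster (marg P · y)]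
  have hsum := marg_union_mul_eq hsep hcluster hfac subset_rfl Finset.inter_subset_right x
  rw [Finset.union_eq_left.2 hS] at hsum
  by_cases h0 : marg P S x = 0
  · have hparent : S ⊆ T.C E.parent :=
      E.vertices_inter_leafCluster.trans_subset Finset.inter_subset_right
    rw [marg_eq_zero_of_subset hP hS h0, zero_mul, Finset.prod_eq_zero
      (Finset.mem_univ E.parent) (marg_eq_zero_of_subset hP hparent h0)]
  · exact mul_left_cancel₀ h0 (by linear_combination hsum)

theorem condIndepMarg (E : T.LeafExtension T') (hP : ∀ y, 0 ≤ P y)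
    (hT' : T'.MargFactorizes P) : CondIndepMarg P T.vertices E.leafCluster := by
  intro x
  have hfac := hT' x
  rw [E.prod_sep (marg P · x), E.prod_cluster (marg P · x),
    ← E.margFactorizes_left hP hT' x, E.vertices_eq] at hfac
  by_cases h0 : ∏ e ∈ T.edgeFinset, marg P (T.sep e) x = 0
  · obtain ⟨e, -, he⟩ := Finset.prod_eq_zero_iff.1 h0
    have hvert := marg_eq_zero_of_subset hP (T.sep_subset_vertices e) he
    rw [hvert, marg_eq_zero_of_subset hP Finset.subset_union_left hvert, zero_mul, zero_mul]
  · exact mul_right_cancel₀ h0 (by linear_combination hfac)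

end Factorization

end LeafExtension

section AddLeaf

variable {T : JTree V} {p : T.ι} {B : Finset V}

theorem exists_walk_leafGraph_mem (h : T.vertices ∩ B ⊆ T.C p) {v : V} (i j : Option T.ι)
    (hi : v ∈ i.elim B T.C) (hj : v ∈ j.elim B T.C) :
    ∃ w : (leafGraph T.G p).Walk i j, ∀ l ∈ w.support, v ∈ l.elim B T.C := by
  have old {i j : T.ι} (hi : v ∈ T.C i) (hj : v ∈ T.C j) :
      ∃ w : (leafGraph T.G p).Walk (some i) (some j), ∀ l ∈ w.support, v ∈ l.elim B T.C := by
    obtain ⟨w, hw⟩ := T.exists_walk_mem hi hj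
    refine ⟨w.map (leafGraphHom T.G p), fun l hl => ?_⟩
    obtain ⟨l', hl', rfl⟩ := List.mem_map.1 (w.support_map (leafGraphHom T.G p) ▸ hl)
    exact hw l' hl'
  have new {j : T.ι} (hB : v ∈ B) (hj : v ∈ T.C j) :
      ∃ w : (leafGraph T.G p).Walk none (some j), ∀ l ∈ w.support, v ∈ l.elim B T.C := by
    obtain ⟨w, hw⟩ := old
      (h (Finset.mem_inter.2 ⟨T.cluster_subset_vertices j hj, hB⟩)) hj
    refine ⟨.cons (leafGraph_adj_none_some T.G p) w, ?_⟩
    rw [SimpleGraph.Walk.support_cons]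
    exact List.forall_mem_cons.2 ⟨hB, hw⟩
  rcases i with _ | i <;> rcases j with _ | j
  · exact ⟨.nil, by simpa using hi⟩
  · exact new hi hj
  · obtain ⟨w, hw⟩ := new hj hi
    exact ⟨w.reverse, by simpa using hw⟩
  · exact old hi hj

/-- The junction tree obtained from `T` by attaching a new leaf with cluster `B` to the
node `p`. -/
def addLeaf (T : JTree V) (p : T.ι) (B : Finset V) (hpB : ¬ T.C p ⊆ B) (hBp : ¬ B ⊆ T.C p)
    (h : T.vertices ∩ B ⊆ T.C p) : JTree V where
  ι := Option T.ι
  G := leafGraph T.G p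
  isTree := isTree_leafGraph T.isTree p
  C i := i.elim B T.C
  noSub := by
    rintro (_ | i) (_ | j) hij hsub
    · exact hij rfl
    · have hBV : B ⊆ T.vertices := hsub.trans (T.cluster_subset_vertices j)
      exact hBp ((Finset.subset_inter hBV subset_rfl).trans h)
    · have hip : T.C i ⊆ T.C p :=
        (Finset.subset_inter (T.cluster_subset_vertices i) hsub).trans h
      exact T.noSub i p (fun hi => hpB (hi ▸ hsub)) hip
    · exact T.noSub i j (fun hi => hij (congrArg some hi)) hsub
  rip i j w hw l hl v hv := by
    obtain ⟨hi, hj⟩ := Finset.mem_inter.1 hv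
    obtain ⟨w', hw'⟩ := exists_walk_leafGraph_mem h i j hi hj
    exact hw' l (support_subset_support_of_isPath (isTree_leafGraph T.isTree p).isAcyclic hw w' hl)

/-- The tree `T.addLeaf p B` as a leaf extension of `T`. -/
def leafExtensionAddLeaf (hpB : ¬ T.C p ⊆ B) (hBp : ¬ B ⊆ T.C p) (h : T.vertices ∩ B ⊆ T.C p) :
    T.LeafExtension (T.addLeaf p B hpB hBp h) where
  nodeEquiv := Equiv.refl _
  parent := p
  cluster_some _ := rfl
  edgeSet_eq := edgeSet_leafGraph T.G p

end AddLeaf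

section RemoveLeaf

/-- The restriction of a junction tree to a subtree. -/
noncomputable def induce (T : JTree V) (s : Set T.ι) (h : (T.G.induce s).IsTree) : JTree V where
  ι := s
  fin := Fintype.ofFinite s
  G := T.G.induce s
  isTree := h
  C i := T.C i
  noSub i j hij := T.noSub i j fun h => hij (Subtype.ext h)
  rip i j w hw l hl := by
    let f := (SimpleGraph.Embedding.induce (G := T.G) s).toHom
    exact T.rip i j (w.map f) (hw.map Subtype.val_injective) l
      ((w.support_map f).symm ▸ List.mem_map_of_mem (f := f) hl)

theorem exists_leafExtension (T : JTree V) [Nontrivial T.ι] :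
    ∃ T₀ : JTree V, Nonempty (T₀.LeafExtension T) := by
  classical
  obtain ⟨l, hl⟩ := T.isTree.exists_vert_degree_one_of_nontrivial
  obtain ⟨p, hlp, hp⟩ := SimpleGraph.degree_eq_one_iff_existsUnique_adj.1 hl
  have htree : (T.G.induce {l}ᶜ).IsTree :=
    ⟨T.isTree.connected.induce_compl_singleton_of_degree_eq_one hl, T.isTree.isAcyclic.induce _⟩
  refine ⟨T.induce {l}ᶜ htree, ⟨{
    nodeEquiv := Equiv.optionSubtypeNe l
    parent := ⟨p, hlp.ne'⟩
    cluster_some := fun _ => rfl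
    edgeSet_eq := edgeSet_eq_insert_of_forall_adj_eq hlp hp }⟩⟩

end RemoveLeaf

section CherryTree

variable [Fintype V] {Ω : V → Type} [∀ v, Fintype (Ω v)] {P : (∀ v, Ω v) → ℝ} {T : JTree V}
  {k : ℕ}

-- The set `N` may be too small to be a separator of a `k`-order cherry tree; weak union allows
-- it to be enlarged within the cluster of `p`.
theorem IsCherry.exists_insert (hT : T.IsCherry k) (hP : ∀ y, 0 ≤ P y)
    (hfac : T.MargFactorizes P) {v : V} (hv : v ∉ T.vertices) {N : Finset V} {p : T.ι}
    (hN : N ⊆ T.C p) (hNk : N.card < k) (hci : CondIndepMarg P T.vertices (insert v N)) :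
    ∃ T' : JTree V, T'.vertices = insert v T.vertices ∧ T'.IsCherry k ∧ T'.MargFactorizes P ∧
      T.Refines T' ∧ ∃ q, insert v N ⊆ T'.C q := by
  obtain ⟨S, hNS, hSp, hS⟩ := Finset.exists_subsuperset_card_eq (n := k - 1) hN
    (by omega) (by rw [hT.1 p]; omega)
  have hSV : S ⊆ T.vertices := hSp.trans (T.cluster_subset_vertices p)
  have hcard : (insert v S).card = k := by
    rw [Finset.card_insert_of_notMem fun h => hv (hSV h)]
    omega
  have hinter : T.vertices ∩ insert v S = S := by
    rw [Finset.inter_insert_of_notMem hv, Finset.inter_eq_right.2 hSV]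
  have hvp : ¬ insert v S ⊆ T.C p := fun h =>
    hv (T.cluster_subset_vertices p (h (Finset.mem_insert_self v S)))
  have hpv : ¬ T.C p ⊆ insert v S := fun h =>
    hvp (Finset.eq_of_subset_of_card_le h (by rw [hcard, hT.1 p])).ge
  have hciS : CondIndepMarg P T.vertices (insert v S) :=
    (hci.symm.weak_union hP (Finset.insert_subset_insert v hNS) (by grind)).symm
  let E := leafExtensionAddLeaf hpv hvp (hinter.trans_subset hSp)
  refine ⟨_, ?_, E.isCherry hT hcard ((congrArg Finset.card hinter).trans hS),
    E.margFactorizes hfac hciS, E.refines, E.nodeEquiv none, Finset.insert_subset_insert v hNS⟩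
  rw [E.vertices_eq]
  exact (Finset.union_insert v _ _).trans (by rw [Finset.union_eq_left.2 hSV])

theorem IsCherry.exists_union (hT : T.IsCherry k) (hP : ∀ y, 0 ≤ P y)
    (hfac : T.MargFactorizes P) {B : Finset V} (hB : B.card ≤ k) {p : T.ι}
    (hp : T.vertices ∩ B ⊆ T.C p) (hci : CondIndepMarg P T.vertices B) :
    ∃ T' : JTree V, T'.vertices = T.vertices ∪ B ∧ T'.IsCherry k ∧ T'.MargFactorizes P ∧
      T.Refines T' ∧ ∃ q, B ⊆ T'.C q := by
  induction hn : (B \ T.vertices).card using Nat.strong_induction_on generalizing T with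
  | _ n ih =>
  by_cases hBT : B ⊆ T.vertices
  · rw [Finset.inter_eq_right.2 hBT] at hp
    exact ⟨T, (Finset.union_eq_left.2 hBT).symm, hT, hfac, .refl T, p, hp⟩
  obtain ⟨v, hvB, hv⟩ := Finset.not_subset.1 hBT
  have hNk : (T.vertices ∩ B).card < k := (Finset.card_lt_card (by grind)).trans_le hB
  have hciv : CondIndepMarg P T.vertices (insert v (T.vertices ∩ B)) :=
    hci.decomposition (Finset.subset_insert _ _) (by grind)
  obtain ⟨T₁, hV₁, hT₁, hfac₁, href₁, q, hq⟩ := hT.exists_insert hP hfac hv hp hNk hciv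
  have hci₁ : CondIndepMarg P T₁.vertices B := hci.weak_union hP (by grind) (by grind)
  have hlt : (B \ T₁.vertices).card < n := hn ▸ Finset.card_lt_card (by grind)
  obtain ⟨T', hV', hT', hfac', href', hB'⟩ := ih _ hlt hT₁ hfac₁ (p := q) (by grind) hci₁ rfl
  exact ⟨T', by grind, hT', hfac', href₁.trans href', hB'⟩

theorem LeafExtension.exists_isCherry {T T₀ T₁ : JTree V} (E : T₀.LeafExtension T)
    (hP : ∀ y, 0 ≤ P y) (hT : T.MargFactorizes P) (hleaf : E.leafCluster.card ≤ k)
    (hT₁ : T₁.IsCherry k) (hfac₁ : T₁.MargFactorizes P) (href : T₀.Refines T₁)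
    (hV₁ : T₁.vertices ⊆ T.vertices) {p : T₁.ι}
    (hp : T₁.vertices ∩ E.leafCluster ⊆ T₁.C p) :
    ∃ T' : JTree V, T'.vertices = T.vertices ∧ T'.IsCherry k ∧ T'.MargFactorizes P ∧
      T.Refines T' := by
  have hV := E.vertices_eq
  have hV₀ := href.vertices_subset
  have hci : CondIndepMarg P T₁.vertices E.leafCluster :=
    (E.condIndepMarg hP hT).weak_union hP hV₀ (hV ▸ hV₁)
  obtain ⟨T', hV', hT', hfac', href', hleaf'⟩ := hT₁.exists_union hP hfac₁ hleaf hp hci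
  exact ⟨T', by grind, hT', hfac', (E.forall_node_iff (p := fun A => ∃ j, A ⊆ T'.C j)).2
    ⟨hleaf', href.trans href'⟩⟩

end CherryTree

end JTree

theorem k_width_junction_tree_pmf_factorizes_by_cherry_tree_general
    {V : Type} [Fintype V] [DecidableEq V] {k : ℕ} {Ω : V → Type} [∀ v, Fintype (Ω v)]
    {P : (∀ v, Ω v) → ℝ} (hP : ∀ y, 0 ≤ P y) {T : JTree V} (hk : k ≤ T.vertices.card)
    (hwidth : ∀ i, (T.C i).card ≤ k) (hT : T.MargFactorizes P) :
    ∃ T' : JTree V, T'.vertices = T.vertices ∧ T'.IsCherry k ∧ T'.MargFactorizes P ∧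
      T.Refines T' := by
  induction hn : Fintype.card T.ι using Nat.strong_induction_on generalizing T with
  | _ n ih =>
  obtain rfl | hlt := hk.eq_or_lt
  · exact ⟨.single T.vertices, JTree.vertices_single _, JTree.isCherry_single _,
      JTree.margFactorizes_single _ P, JTree.refines_single subset_rfl⟩
  have := T.nontrivial_of_width_lt_card_vertices hwidth hlt
  obtain ⟨T₀, ⟨E⟩⟩ := T.exists_leafExtension
  obtain ⟨hleaf, hwidth₀⟩ := (E.forall_node_iff (p := fun A => A.card ≤ k)).1 hwidth
  by_cases hk₀ : k ≤ T₀.vertices.card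
  · obtain ⟨T₁, hV₁, hT₁, hfac₁, href⟩ :=
      ih _ (by grind [E.card_node]) hk₀ hwidth₀ (E.margFactorizes_left hP hT) rfl
    obtain ⟨p, hp⟩ := href E.parent
    have hinter : T₀.vertices ∩ E.leafCluster ⊆ T₀.C E.parent :=
      E.vertices_inter_leafCluster.trans_subset Finset.inter_subset_right
    exact E.exists_isCherry hP hT hleaf hT₁ hfac₁ href (hV₁ ▸ E.refines.vertices_subset)
      (hV₁ ▸ hinter.trans hp)
  · obtain ⟨A, hA₀, hA, rfl⟩ := Finset.exists_subsuperset_card_eq E.refines.vertices_subset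
      (le_of_not_ge hk₀) hk
    refine E.exists_isCherry hP hT hleaf (JTree.isCherry_single A)
      (JTree.margFactorizes_single A P) (JTree.refines_single hA₀) ?_ (p := ()) ?_
    · rwa [JTree.vertices_single]
    · rw [JTree.vertices_single]
      exact Finset.inter_subset_left

/-- a probability mass function on a finite product that factorizes
according to a junction tree on `V` all of whose clusters have at most `k`
elements (a `k`-width junction tree, `k ≤ |V|`) also factorizes according to some
`k`-order cherry tree on `V`. -/
theorem k_width_junction_tree_pmf_factorizes_by_cherry_tree
    {V : Type} [Fintype V] [DecidableEq V] (k : ℕ)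
    {Ω : V → Type} [∀ v, Fintype (Ω v)] [∀ v, Nonempty (Ω v)]
    (hk : k ≤ Fintype.card V)
    (P : (∀ v, Ω v) → ℝ) (hP0 : ∀ y, 0 ≤ P y) (hP1 : ∑ y : ∀ v, Ω v, P y = 1)
    (T : JTree V) (hcov : T.CoversAll) (hwidth : ∀ i, (T.C i).card ≤ k)
    (hfac : Factorizes T P) :
    ∃ T' : JTree V, T'.CoversAll ∧ T'.IsCherry k ∧ Factorizes T' P := by
  have hV := JTree.coversAll_iff_vertices_eq_univ.1 hcov
  obtain ⟨T', hV', hT', hfac', -⟩ :=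
    k_width_junction_tree_pmf_factorizes_by_cherry_tree_general hP0 (by rwa [hV]) hwidth
      ((JTree.margFactorizes_iff_factorizes hcov P).2 hfac)
  have hcov' : T'.CoversAll := JTree.coversAll_iff_vertices_eq_univ.2 (hV'.trans hV)
  exact ⟨T', hcov', hT', (JTree.margFactorizes_iff_factorizes hcov' P).1 hfac'⟩
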